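/- For all non-negative integers n and k with n ≥ k, one has A_B(n,k) = Σ_{r=0}^{k} (−1)^{k−r} · 2^r · r! · S_B(n,r) · C(n−r, k−r), where C(a,b) denotes the binomial coefficient. -/

import Mathlib

open Classical Finset

/-! ### Signed permutations (type B), window notation -/

/-- `w` is the window notation of a signed permutation of `{1,…,n}`. -/
def IsSignedPerm {n : ℕ} (w : Fin n → ℤ) : Prop :=
  (∀ i, 1 ≤ |w i| ∧ |w i| ≤ (n : ℤ)) ∧ Function.Injective fun i => |w i|

/-- The value `β(i)` for `1 ≤ i ≤ n`, and `0` otherwise (so `β(0) = 0`). -/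
def bVal {n : ℕ} (w : Fin n → ℤ) (i : ℕ) : ℤ :=
  if h : 1 ≤ i ∧ i ≤ n then w ⟨i - 1, by omega⟩ else 0

/-- Type `B` descent number: `#{i ∈ {0,…,n−1} : β(i) > β(i+1)}`, with `β(0) = 0`. -/
noncomputable def desB {n : ℕ} (w : Fin n → ℤ) : ℕ :=
  ((Finset.range n).filter fun i => bVal w (i + 1) < bVal w i).card

/-- Type `B` Eulerian number `A_B(n,k)`. -/
noncomputable def EulB (n k : ℕ) : ℕ :=
  Nat.card { w : Fin n → ℤ // IsSignedPerm w ∧ desB w = k }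

/-- Type `D` descent number: as in type `B` but with the convention `γ(0) = −γ(2)`. -/
noncomputable def desD {n : ℕ} (w : Fin n → ℤ) : ℕ :=
  ((Finset.range n).filter fun i =>
    bVal w (i + 1) < (if i = 0 then -(bVal w 2) else bVal w i)).card

/-- `w` has an even number of negative entries. -/
def IsEvenSigned {n : ℕ} (w : Fin n → ℤ) : Prop :=
  Even ((Finset.univ.filter fun i => w i < 0)).card

/-- Type `D` Eulerian number `A_D(n,k)`. -/
noncomputable def EulD (n k : ℕ) : ℕ :=
  Nat.card { w : Fin n → ℤ // IsSignedPerm w ∧ IsEvenSigned w ∧ desD w = k }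

/-! ### Set partitions of types B and D -/

/-- The negative `−C` of a block `C`. -/
def negSet (C : Finset ℤ) : Finset ℤ := C.image fun x => -x

/-- A `Bₙ`-partition: a set partition of `{−n,…,−1,1,…,n}` such that at most one block
satisfies `C = −C` (the zero-block), and `−C` is a block whenever `C` is. -/
structure BPartition (n : ℕ) where
  blocks : Finset (Finset ℤ)
  cover : ∀ x : ℤ, (x ≠ 0 ∧ |x| ≤ (n : ℤ)) ↔ ∃ C ∈ blocks, x ∈ C
  nonempty : ∀ C ∈ blocks, C.Nonempty
  disj : ∀ C ∈ blocks, ∀ C' ∈ blocks, C ≠ C' → Disjoint C C'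
  closed : ∀ C ∈ blocks, negSet C ∈ blocks
  zeroUnique : ∀ C ∈ blocks, ∀ C' ∈ blocks, negSet C = C → negSet C' = C' → C = C'

/-- A `Dₙ`-partition: a `Bₙ`-partition whose zero-block, if present, has at least
two positive elements. -/
def IsDPartition {n : ℕ} (P : BPartition n) : Prop :=
  ∀ C ∈ P.blocks, negSet C = C → 2 ≤ (C.filter fun x => 0 < x).card

/-- `P` has exactly `r` pairs `{C, −C}` of nonzero blocks. -/
def hasPairs {n : ℕ} (P : BPartition n) (r : ℕ) : Prop :=
  (P.blocks.filter fun C => negSet C ≠ C).card = 2 * r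

/-- Stirling number of the second kind of type `B`. -/
noncomputable def SB (n r : ℕ) : ℕ :=
  Nat.card { P : BPartition n // hasPairs P r }

/-- Stirling number of the second kind of type `D`. -/
noncomputable def SD (n r : ℕ) : ℕ :=
  Nat.card { P : BPartition n // IsDPartition P ∧ hasPairs P r }

/-- An ordered `Bₙ`-partition: a `Bₙ`-partition with a linear order on its blocks in
which the zero-block (if present) comes first and `C, −C` are always adjacent. -/
structure OrderedBPartition (n : ℕ) where
  P : BPartition n
  order : List (Finset ℤ)
  nodup : order.Nodup
  same : order.toFinset = P.blocks
  zeroFirst : ∀ C ∈ P.blocks, negSet C = C → order[0]? = some C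
  adjacent : ∀ C ∈ P.blocks, negSet C ≠ C →
    ∃ i : ℕ, (order[i]? = some C ∧ order[i+1]? = some (negSet C)) ∨
             (order[i]? = some (negSet C) ∧ order[i+1]? = some C)

/-! ### Classical Stirling and Eulerian numbers -/

/-- The classical Stirling number of the second kind `S(n,r)`. -/
noncomputable def Stir (n r : ℕ) : ℕ :=
  Nat.card { P : Finpartition (Finset.univ : Finset (Fin n)) // P.parts.card = r }

/-- Number of descents of a permutation of `{1,…,n}`. -/
noncomputable def desA {n : ℕ} (σ : Equiv.Perm (Fin n)) : ℕ :=
  ((Finset.range (n - 1)).filter fun i =>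
    ∃ h : i + 1 < n, σ ⟨i + 1, h⟩ < σ ⟨i, Nat.lt_of_succ_lt h⟩).card

/-- The classical Eulerian number `A(n,k)`: permutations with `k−1` descents
(and `A(n,0) = 0`). -/
noncomputable def EulA (n k : ℕ) : ℕ :=
  if k = 0 then 0 else Nat.card { σ : Equiv.Perm (Fin n) // desA σ = k - 1 }

/-! ### Colored permutations -/

/-- `π` is (the window notation of) a colored permutation in `G_{m,n}`. -/
def IsColoredPerm {m n : ℕ} (π : Fin n → Fin n × ZMod m) : Prop :=
  Function.Bijective fun i => (π i).1

/-- The color order `a ≺ b` on the colored alphabet. -/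
def colorLt {m n : ℕ} (a b : Fin n × ZMod m) : Prop :=
  b.2.val < a.2.val ∨ (a.2 = b.2 ∧ a.1 < b.1)

/-- The descent number `des_G` of a colored permutation. -/
noncomputable def desG {m n : ℕ} (π : Fin n → Fin n × ZMod m) : ℕ :=
  ((Finset.range (n - 1)).filter fun i =>
    ∃ h : i + 1 < n, colorLt (π ⟨i + 1, h⟩) (π ⟨i, Nat.lt_of_succ_lt h⟩)).card
  + (if h : 0 < n then (if (π ⟨0, h⟩).2 ≠ 0 then 1 else 0) else 0)

/-- The Eulerian number `A_m(n,k)` of `G_{m,n}`. -/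
noncomputable def EulG (m n k : ℕ) : ℕ :=
  Nat.card { π : Fin n → Fin n × ZMod m // IsColoredPerm π ∧ desG π = k }

/-- The shift `C^{[t]}` of a block of the colored alphabet. -/
def shiftBlock {m n : ℕ} (t : ZMod m) (C : Finset (Fin n × ZMod m)) :
    Finset (Fin n × ZMod m) :=
  C.image fun p => (p.1, p.2 + t)

/-- A `G_{m,n}`-partition. -/
structure GPartition (m n : ℕ) where
  blocks : Finset (Finset (Fin n × ZMod m))
  cover : ∀ x : Fin n × ZMod m, ∃ C ∈ blocks, x ∈ C
  nonempty : ∀ C ∈ blocks, C.Nonempty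
  disj : ∀ C ∈ blocks, ∀ C' ∈ blocks, C ≠ C' → Disjoint C C'
  closed : ∀ C ∈ blocks, shiftBlock 1 C ∈ blocks
  zeroUnique : ∀ C ∈ blocks, ∀ C' ∈ blocks,
    shiftBlock 1 C = C → shiftBlock 1 C' = C' → C = C'

/-- The number of equivalence classes (orbits under shifting) of nonzero blocks. -/
noncomputable def numClasses {m n : ℕ} (P : GPartition m n) : ℕ :=
  ((P.blocks.filter fun C => shiftBlock 1 C ≠ C).image
    fun C => (Finset.range m).image fun t => shiftBlock (t : ZMod m) C).card

/-- Stirling number of the second kind `S_m(n,r)` for `G_{m,n}`. -/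
noncomputable def SG (m n r : ℕ) : ℕ :=
  Nat.card { P : GPartition m n // numClasses P = r }

/-- An ordered `G_{m,n}`-partition. -/
structure OrderedGPartition (m n : ℕ) where
  P : GPartition m n
  order : List (Finset (Fin n × ZMod m))
  nodup : order.Nodup
  same : order.toFinset = P.blocks
  zeroFirst : ∀ C ∈ P.blocks, shiftBlock 1 C = C → order[0]? = some C
  consec : ∀ C ∈ P.blocks, shiftBlock 1 C ≠ C →
    ∃ i : ℕ, ∃ s : ZMod m, ∀ t : ℕ, t < m →
      order[i + t]? = some (shiftBlock (s + (t : ZMod m)) C)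

/-!
Let `D_n p = (1 + (2n + 1)X) p + 2X(1 - X) p'`. Inserting `±(n + 1)` into the window of a signed
permutation of `{1, …, n}` with `d` descents produces `2d + 1` windows with `d` descents and
`2(n - d) + 1` windows with `d + 1` descents, so the type `B` Eulerian polynomials satisfy
`E_{n + 1} = D_n E_n`. A `B_n`-partition with `r` pairs of nonzero blocks extends to `±(n + 1)` in
`2r + 1` ways without a new pair of blocks and in one way with a new pair, while
`D_n (X^r (1 - X)^(n - r)) = (2r + 1) X^r (1 - X)^(n + 1 - r) + 2(r + 1) X^(r + 1) (1 - X)^(n - r)`.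
Hence `∑_r 2^r r! S_B(n, r) X^r (1 - X)^(n - r)` satisfies the same recurrence and equals `E_n`, and
it remains to compare the coefficients of `X^k`.
-/

section EulerOperator

open Polynomial (X derivative)
open scoped Polynomial

variable {R : Type*} [CommRing R]

/-- The differential operator `p ↦ (1 + (2n + 1)X) p + 2X(1 - X) p'`, which sends the type `B`
Eulerian polynomial of rank `n` to the one of rank `n + 1`. -/
noncomputable def eulerOperatorB (R : Type*) [CommRing R] (n : ℕ) : R[X] →ₗ[R] R[X] :=
  LinearMap.mulLeft R (1 + (2 * (n : R[X]) + 1) * X) +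
    LinearMap.mulLeft R (2 * X * (1 - X)) ∘ₗ derivative

lemma eulerOperatorB_apply (n : ℕ) (p : R[X]) :
    eulerOperatorB R n p =
      (1 + (2 * (n : R[X]) + 1) * X) * p + 2 * X * (1 - X) * derivative p := rfl

lemma X_mul_derivative_X_pow (d : ℕ) : X * derivative (X ^ d : R[X]) = (d : R[X]) * X ^ d := by
  cases d with
  | zero => simp
  | succ d =>
    rw [Polynomial.derivative_X_pow, Polynomial.C_eq_natCast, Nat.add_sub_cancel]
    ring

lemma one_sub_X_mul_derivative_one_sub_X_pow (m : ℕ) :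
    (1 - X) * derivative ((1 - X) ^ m : R[X]) = -((m : R[X]) * (1 - X) ^ m) := by
  cases m with
  | zero => simp
  | succ m =>
    rw [Polynomial.derivative_pow, Polynomial.C_eq_natCast, Nat.add_sub_cancel,
      Polynomial.derivative_sub, Polynomial.derivative_one, Polynomial.derivative_X]
    ring

lemma eulerOperatorB_X_pow {n d : ℕ} (hd : d ≤ n) :
    eulerOperatorB R n (X ^ d) = (2 * d + 1) • X ^ d + (2 * (n - d) + 1) • X ^ (d + 1) := by
  rw [eulerOperatorB_apply, nsmul_eq_mul, nsmul_eq_mul]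
  push_cast [Nat.cast_sub hd]
  linear_combination 2 * (1 - X) * X_mul_derivative_X_pow (R := R) d

lemma eulerOperatorB_X_pow_mul_one_sub_X_pow {n r : ℕ} (hr : r ≤ n) :
    eulerOperatorB R n (X ^ r * (1 - X) ^ (n - r)) =
      (2 * r + 1) • (X ^ r * (1 - X) ^ (n + 1 - r)) +
        (2 * (r + 1)) • (X ^ (r + 1) * (1 - X) ^ (n - r)) := by
  obtain ⟨m, rfl⟩ := Nat.exists_eq_add_of_le hr
  rw [Nat.add_sub_cancel_left, add_assoc, Nat.add_sub_cancel_left, eulerOperatorB_apply,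
    Polynomial.derivative_mul, nsmul_eq_mul, nsmul_eq_mul]
  push_cast
  linear_combination 2 * (1 - X) * (1 - X) ^ m * X_mul_derivative_X_pow (R := R) r +
    2 * X * X ^ r * one_sub_X_mul_derivative_one_sub_X_pow (R := R) m

lemma coeff_one_sub_X_pow (m k : ℕ) :
    ((1 - X) ^ m : R[X]).coeff k = (-1) ^ k * (m.choose k : R) := by
  have one_sub_X_pow : ((1 - X) ^ m : R[X]) = ((1 + X) ^ m).comp (Polynomial.C (-1) * X) := by
    simp [sub_eq_add_neg]
  rw [one_sub_X_pow, Polynomial.comp_C_mul_X_coeff, Polynomial.coeff_one_add_X_pow, mul_comm]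

lemma coeff_X_pow_mul_one_sub_X_pow (r m k : ℕ) :
    (X ^ r * (1 - X) ^ m : R[X]).coeff k =
      if r ≤ k then (-1) ^ (k - r) * (m.choose (k - r) : R) else 0 := by
  rw [Polynomial.coeff_X_pow_mul', coeff_one_sub_X_pow]

end EulerOperator

section Insertion

variable {n : ℕ}

lemma bVal_zero (w : Fin n → ℤ) : bVal w 0 = 0 := by simp [bVal]

lemma bVal_succ (w : Fin n → ℤ) (i : Fin n) : bVal w (i + 1) = w i := by simp [bVal]

lemma bVal_eq_zero_of_lt (w : Fin n → ℤ) {i : ℕ} (hi : n < i) : bVal w i = 0 := by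
  simp [bVal, hi.not_ge]

lemma bVal_insertNth_of_le (w : Fin n → ℤ) (p : Fin (n + 1)) (v : ℤ) {i : ℕ} (hi : i ≤ p) :
    bVal (p.insertNth v w : Fin (n + 1) → ℤ) i = bVal w i := by
  cases i with
  | zero => rw [bVal_zero, bVal_zero]
  | succ i =>
    let j : Fin n := ⟨i, Nat.lt_of_lt_of_le hi (Nat.lt_succ_iff.mp p.is_lt)⟩
    have hj : p.succAbove j = j.castSucc :=
      Fin.succAbove_of_castSucc_lt p j (Fin.lt_def.mpr hi)
    have := bVal_succ (p.insertNth v w : Fin (n + 1) → ℤ) (p.succAbove j)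
    rwa [Fin.insertNth_apply_succAbove, hj, ← bVal_succ w j] at this

lemma bVal_insertNth_self (w : Fin n → ℤ) (p : Fin (n + 1)) (v : ℤ) :
    bVal (p.insertNth v w : Fin (n + 1) → ℤ) (p + 1) = v := by
  rw [bVal_succ, Fin.insertNth_apply_same]

lemma bVal_insertNth_of_lt (w : Fin n → ℤ) (p : Fin (n + 1)) (v : ℤ) {i : ℕ} (hi : p < i) :
    bVal (p.insertNth v w : Fin (n + 1) → ℤ) (i + 1) = bVal w i := by
  obtain ⟨i, rfl⟩ := Nat.exists_eq_succ_of_ne_zero (Nat.ne_zero_of_lt hi)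
  by_cases hn : i < n
  · let j : Fin n := ⟨i, hn⟩
    have hj : p.succAbove j = j.succ :=
      Fin.succAbove_of_le_castSucc p j (Fin.le_def.mpr (Nat.lt_succ_iff.mp hi))
    have := bVal_succ (p.insertNth v w : Fin (n + 1) → ℤ) (p.succAbove j)
    rwa [Fin.insertNth_apply_succAbove, hj, ← bVal_succ w j] at this
  · rw [bVal_eq_zero_of_lt _ (by omega), bVal_eq_zero_of_lt _ (by omega)]

/-- `w` has a type `B` descent at `i`: with `β` the signed permutation of window `w` and
`β(0) = 0`, this says `β(i) > β(i + 1)`, so positions are counted from `0`. -/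
def IsDescentB (w : Fin n → ℤ) (i : ℕ) : Prop := bVal w (i + 1) < bVal w i

lemma desB_eq_card (w : Fin n → ℤ) : desB w = #{i : Fin n | IsDescentB w i} := by
  rw [desB, card_filter, Finset.sum_range, card_filter]
  congr!

lemma desB_le (w : Fin n → ℤ) : desB w ≤ n := by
  simpa [desB_eq_card] using card_filter_le (univ : Finset (Fin n)) fun i => IsDescentB w i

lemma IsSignedPerm.abs_bVal_le {w : Fin n → ℤ} (hw : IsSignedPerm w) (i : ℕ) : |bVal w i| ≤ n := by
  unfold bVal
  split_ifs
  · exact (hw.1 _).2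
  · simp

variable {w : Fin n → ℤ} {v : ℤ}

lemma isDescentB_insertNth_self (hv : ∀ i, |bVal w i| < |v|) (p : Fin (n + 1)) :
    IsDescentB (p.insertNth v w : Fin (n + 1) → ℤ) p ↔ v < 0 := by
  rw [IsDescentB, bVal_insertNth_self, bVal_insertNth_of_le w p v le_rfl]
  grind

lemma isDescentB_insertNth_succAbove (hv : ∀ i, |bVal w i| < |v|) (p : Fin (n + 1)) (j : Fin n) :
    IsDescentB (p.insertNth v w : Fin (n + 1) → ℤ) (p.succAbove j) ↔
      if j.castSucc = p then 0 < v else IsDescentB w j := by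
  unfold IsDescentB
  rcases lt_or_ge j.castSucc p with hj | hj
  · rw [Fin.succAbove_of_castSucc_lt p j hj, if_neg hj.ne, Fin.val_castSucc,
      bVal_insertNth_of_le w p v (i := j + 1) hj,
      bVal_insertNth_of_le w p v (i := j) hj.le]
  · rw [Fin.succAbove_of_le_castSucc p j hj, Fin.val_succ,
      bVal_insertNth_of_lt w p v (i := j + 1) (Nat.lt_succ_of_le hj)]
    split_ifs with h
    · rw [← h, ← Fin.val_castSucc j, bVal_insertNth_self]
      grind
    · rw [bVal_insertNth_of_lt w p v (i := j) (lt_of_le_of_ne hj (Fin.val_ne_of_ne (Ne.symm h)))]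

lemma desB_insertNth_eq_sum (hv : ∀ i, |bVal w i| < |v|) (p : Fin (n + 1)) :
    desB (p.insertNth v w : Fin (n + 1) → ℤ) =
      (if v < 0 then 1 else 0) +
        ∑ j : Fin n, if (if j.castSucc = p then 0 < v else IsDescentB w j) then 1 else 0 := by
  simp only [desB_eq_card, card_filter, Fin.sum_univ_succAbove _ p,
    isDescentB_insertNth_self hv, isDescentB_insertNth_succAbove hv]

lemma desB_insertNth_last (hv : ∀ i, |bVal w i| < |v|) :
    desB ((Fin.last n).insertNth v w : Fin (n + 1) → ℤ) = desB w + if v < 0 then 1 else 0 := by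
  simp only [desB_insertNth_eq_sum hv, Fin.castSucc_ne_last, if_false, desB_eq_card, card_filter,
    add_comm]

lemma desB_insertNth_castSucc (hv : ∀ i, |bVal w i| < |v|) (q : Fin n) :
    desB (q.castSucc.insertNth v w : Fin (n + 1) → ℤ) =
      if IsDescentB w q then desB w else desB w + 1 := by
  have hv0 : v ≠ 0 := abs_pos.mp ((abs_nonneg _).trans_lt (hv 0))
  rw [desB_insertNth_eq_sum hv, desB_eq_card, card_filter,
    ← add_sum_erase univ _ (mem_univ q), ← add_sum_erase univ _ (mem_univ q)]
  have unchanged : ∀ j ∈ univ.erase q,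
      (if (if j.castSucc = q.castSucc then 0 < v else IsDescentB w j) then 1 else 0) =
        if IsDescentB w j then 1 else 0 := fun j hj => by
    simp [Finset.ne_of_mem_erase hj]
  rw [sum_congr rfl unchanged]
  simp only [if_true]
  split_ifs <;> omega

lemma sum_desB_insertNth {M : Type*} [AddCommMonoid M] (hv : ∀ i, |bVal w i| < |v|) (F : ℕ → M) :
    ∑ p : Fin (n + 1), F (desB (p.insertNth v w : Fin (n + 1) → ℤ)) =
      desB w • F (desB w) + (n - desB w) • F (desB w + 1) +
        F (desB w + if v < 0 then 1 else 0) := by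
  have card_ascents : #{i : Fin n | ¬IsDescentB w i} = n - desB w := by
    rw [desB_eq_card, ← Finset.compl_filter, card_compl, Fintype.card_fin]
  simp only [Fin.sum_univ_castSucc, desB_insertNth_last hv, desB_insertNth_castSucc hv,
    apply_ite F, sum_ite, sum_const, card_ascents, ← desB_eq_card]

end Insertion

/-- The hyperoctahedral group `B_n`, its elements being given in window notation. -/
abbrev SignedPerm (n : ℕ) : Type := {w : Fin n → ℤ // IsSignedPerm w}

namespace SignedPerm

variable {n : ℕ}

lemma abs_units_mul_succ (ε : ℤˣ) : |(ε : ℤ) * (n + 1)| = n + 1 := by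
  rw [abs_mul, Int.isUnit_iff_abs_eq.mp ε.isUnit, one_mul, abs_of_nonneg (by positivity)]

lemma abs_bVal_lt (w : SignedPerm n) (ε : ℤˣ) (i : ℕ) : |bVal w.1 i| < |(ε : ℤ) * (n + 1)| := by
  rw [abs_units_mul_succ]
  exact Int.lt_add_one_of_le (w.2.abs_bVal_le i)

instance : Finite (SignedPerm n) :=
  ((Set.finite_Icc (fun _ => -(n : ℤ)) (fun _ => (n : ℤ))).subset fun _ hw =>
    ⟨fun i => (abs_le.mp (hw.1 i).2).1, fun i => (abs_le.mp (hw.1 i).2).2⟩).to_subtype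

noncomputable instance : Fintype (SignedPerm n) := Fintype.ofFinite _

lemma card_desB_eq (n k : ℕ) : #{w : SignedPerm n | desB w.1 = k} = EulB n k := by
  rw [EulB, ← Fintype.card_subtype, ← Nat.card_eq_fintype_card]
  exact Nat.card_congr (Equiv.subtypeSubtypeEquivSubtypeInter _ fun w => desB w = k)

/-- The signed permutation obtained from `w` by inserting the letter `ε (n + 1)` at position `p` of
its window. -/
def insertMax (x : SignedPerm n × Fin (n + 1) × ℤˣ) : SignedPerm (n + 1) where
  val := x.2.1.insertNth ((x.2.2 : ℤ) * (n + 1)) x.1.1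
  property := by
    obtain ⟨w, p, ε⟩ := x
    have abs_ne (j : Fin n) : |w.1 j| ≠ |(ε : ℤ) * (n + 1)| := by
      rw [← bVal_succ w.1]
      exact (abs_bVal_lt w ε _).ne
    refine ⟨fun i => ?_, fun i j hij => ?_⟩
    · cases i using Fin.succAboveCases p with
      | x => simp only [Fin.insertNth_apply_same, abs_units_mul_succ]; grind
      | p i =>
        simp only [Fin.insertNth_apply_succAbove]
        have := w.2.1 i
        grind
    · cases i using Fin.succAboveCases p <;> cases j using Fin.succAboveCases p <;>
        simp only [Fin.insertNth_apply_same, Fin.insertNth_apply_succAbove] at hij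
      · rfl
      · exact absurd hij.symm (abs_ne _)
      · exact absurd hij (abs_ne _)
      · rw [w.2.2 hij]

lemma abs_insertMax_eq_iff (x : SignedPerm n × Fin (n + 1) × ℤˣ) (i : Fin (n + 1)) :
    |(insertMax x).1 i| = n + 1 ↔ i = x.2.1 := by
  have abs_at : |(insertMax x).1 x.2.1| = n + 1 := by
    simp only [insertMax, Fin.insertNth_apply_same, abs_units_mul_succ]
  exact ⟨fun hi => (insertMax x).2.2 (hi.trans abs_at.symm), fun hi => hi ▸ abs_at⟩

lemma insertMax_injective : Function.Injective (insertMax (n := n)) := by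
  rintro ⟨w, p, ε⟩ ⟨w', p', ε'⟩ h
  obtain rfl : p = p' := by
    rw [← abs_insertMax_eq_iff ⟨w', p', ε'⟩, ← h, abs_insertMax_eq_iff]
  have h_insertNth : (p.insertNth ((ε : ℤ) * (n + 1)) w.1 : Fin (n + 1) → ℤ) =
      p.insertNth ((ε' : ℤ) * (n + 1)) w'.1 := congrArg Subtype.val h
  obtain ⟨hε, hw⟩ := Fin.insertNth_inj.mp h_insertNth
  have hn : (n : ℤ) + 1 ≠ 0 := by positivity
  rw [Subtype.ext hw, Units.ext (mul_right_cancel₀ hn hε)]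

lemma exists_abs_eq (w : SignedPerm (n + 1)) : ∃ p, |w.1 p| = n + 1 := by
  have surj : Set.SurjOn (fun i => |w.1 i|) (univ : Finset (Fin (n + 1))) (Icc (1 : ℤ) (n + 1)) :=
    surjOn_of_injOn_of_card_le _ (fun i _ => by simpa using w.2.1 i) w.2.2.injOn (by simp)
  obtain ⟨p, -, hp⟩ := surj (show (n + 1 : ℤ) ∈ _ by simp)
  exact ⟨p, hp⟩

lemma insertMax_surjective : Function.Surjective (insertMax (n := n)) := by
  intro w
  obtain ⟨p, hp⟩ := w.exists_abs_eq
  obtain ⟨ε, hε⟩ : ∃ ε : ℤˣ, (ε : ℤ) * (n + 1) = w.1 p := by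
    rcases abs_eq (by positivity) |>.mp hp with h | h
    exacts [⟨1, by simp [h]⟩, ⟨-1, by simp [h]⟩]
  refine ⟨⟨⟨p.removeNth w.1, fun i => ?_, ?_⟩, p, ε⟩, Subtype.ext ?_⟩
  · have abs_ne : |w.1 (p.succAbove i)| ≠ |w.1 p| := fun h => Fin.succAbove_ne p i (w.2.2 h)
    have := w.2.1 (p.succAbove i)
    simp only [Fin.removeNth]
    grind
  · exact w.2.2.comp Fin.succAbove_right_injective
  · simp [insertMax, hε]

lemma sum_desB_succ {M : Type*} [AddCommMonoid M] (F : ℕ → M) :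
    ∑ w : SignedPerm (n + 1), F (desB w.1) =
      ∑ w : SignedPerm n,
        ((2 * desB w.1 + 1) • F (desB w.1) + (2 * (n - desB w.1) + 1) • F (desB w.1 + 1)) := by
  rw [← (Function.Bijective.sum_comp ⟨insertMax_injective, insertMax_surjective⟩ _),
    Fintype.sum_prod_type]
  refine sum_congr rfl fun w _ => ?_
  have hn : (0 : ℤ) < n + 1 := by positivity
  rw [Fintype.sum_prod_type_right]
  simp only [insertMax, sum_desB_insertNth (w.abs_bVal_lt _), UnitsInt.univ]
  rw [sum_pair (by decide)]
  simp only [Units.val_one, Units.val_neg, one_mul, neg_mul, Left.neg_neg_iff, hn, hn.not_gt,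
    if_true, if_false, add_zero]
  module

end SignedPerm

section EulerianPolynomial

open Polynomial (X)
open scoped Polynomial

/-- The type `B` Eulerian polynomial `∑ X ^ des_B(w)`, the sum being over the signed permutations
`w` of `{1, …, n}`. -/
noncomputable def eulerianPolynomialB (n : ℕ) : ℤ[X] := ∑ w : SignedPerm n, X ^ desB w.1

lemma coeff_eulerianPolynomialB (n k : ℕ) : (eulerianPolynomialB n).coeff k = EulB n k := by
  simp only [eulerianPolynomialB, Polynomial.finsetSum_coeff, Polynomial.coeff_X_pow,
    ← SignedPerm.card_desB_eq, sum_boole, eq_comm]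

lemma eulerianPolynomialB_zero : eulerianPolynomialB 0 = 1 := by
  have : Unique (SignedPerm 0) :=
    { default := ⟨Fin.elim0, fun i => i.elim0, fun i => i.elim0⟩
      uniq := fun _ => Subsingleton.elim _ _ }
  simp [eulerianPolynomialB, desB]

lemma eulerianPolynomialB_succ (n : ℕ) :
    eulerianPolynomialB (n + 1) = eulerOperatorB ℤ n (eulerianPolynomialB n) := by
  simp only [eulerianPolynomialB, map_sum, eulerOperatorB_X_pow (desB_le _)]
  exact SignedPerm.sum_desB_succ (X ^ ·)

end EulerianPolynomial

/-- An odd idempotent map of `ℤ` that does not increase absolute values and vanishes outside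
`{-n, …, n}`. Such maps encode `B_n`-partitions: the map sends every element of a nonzero block to
the element of that block of least absolute value, and the zero-block to `0`. -/
structure SignedRetraction (n : ℕ) where
  toFun : ℤ → ℤ
  map_neg' (x : ℤ) : toFun (-x) = -toFun x
  map_map' (x : ℤ) : toFun (toFun x) = toFun x
  abs_map_le' (x : ℤ) : |toFun x| ≤ |x|
  map_of_lt' (x : ℤ) : n < |x| → toFun x = 0

namespace SignedRetraction

variable {n : ℕ}

instance : FunLike (SignedRetraction n) ℤ ℤ where
  coe := toFun
  coe_injective e e' h := by cases e; cases e'; congr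

variable (e : SignedRetraction n)

lemma map_neg (x : ℤ) : e (-x) = -e x := e.map_neg' x

lemma map_map (x : ℤ) : e (e x) = e x := e.map_map' x

lemma abs_map_le (x : ℤ) : |e x| ≤ |x| := e.abs_map_le' x

lemma map_of_lt {x : ℤ} (hx : n < |x|) : e x = 0 := e.map_of_lt' x hx

lemma map_zero : e 0 = 0 := by simpa using e.abs_map_le 0

lemma abs_le_of_map_ne_zero {x : ℤ} (hx : e x ≠ 0) : |x| ≤ n :=
  not_lt.mp fun h => hx (e.map_of_lt h)

lemma abs_map_le_natCast (x : ℤ) : |e x| ≤ n := by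
  by_cases hx : e x = 0
  · simp [hx]
  · exact (e.abs_map_le x).trans (e.abs_le_of_map_ne_zero hx)

/-- The fixed points of `e`; they are exactly the values of `e`. -/
noncomputable def fixedPoints : Finset ℤ := {v ∈ Icc (-(n : ℤ)) n | e v = v}

/-- The number of positive fixed points of `e`, which is the number of pairs `{C, -C}` of nonzero
blocks of the encoded `B_n`-partition. -/
noncomputable def rank : ℕ := #{v ∈ Icc (1 : ℤ) n | e v = v}

lemma mem_fixedPoints {v : ℤ} : v ∈ e.fixedPoints ↔ e v = v := by
  simp only [fixedPoints, mem_filter, mem_Icc, ← abs_le, and_iff_right_iff_imp]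
  exact fun hv => hv ▸ e.abs_map_le_natCast v

lemma rank_le : e.rank ≤ n := by
  simpa [rank] using card_filter_le (Icc (1 : ℤ) n) fun v => e v = v

lemma card_fixedPoints_erase_zero : #(e.fixedPoints.erase 0) = 2 * e.rank := by
  let pos : Finset ℤ := {v ∈ Icc (1 : ℤ) n | e v = v}
  have mem_pos (v : ℤ) : v ∈ pos ↔ 0 < v ∧ e v = v := by
    have := e.abs_map_le_natCast v
    grind
  have split : e.fixedPoints.erase 0 = pos ∪ pos.image (-·) := by
    ext v
    have := e.map_neg v
    simp only [mem_erase, mem_fixedPoints, mem_union, mem_image, mem_pos]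
    constructor
    · rintro ⟨hv, hev⟩
      rcases hv.lt_or_gt with h | h
      · exact Or.inr ⟨-v, by omega, by omega⟩
      · exact Or.inl ⟨h, hev⟩
    · rintro (⟨hv, hev⟩ | ⟨u, ⟨hu, heu⟩, rfl⟩)
      · exact ⟨hv.ne', hev⟩
      · exact ⟨by omega, by rw [e.map_neg, heu]⟩
  have disj : Disjoint pos (pos.image (-·)) := by
    simp only [disjoint_left, mem_image, mem_pos]
    rintro _ hv ⟨u, hu, rfl⟩
    omega
  rw [split, card_union_of_disjoint disj, card_image_of_injective _ neg_injective, two_mul]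
  rfl

lemma card_fixedPoints : #e.fixedPoints = 2 * e.rank + 1 := by
  rw [← card_fixedPoints_erase_zero, card_erase_add_one (e.mem_fixedPoints.mpr e.map_zero)]

lemma eq_of_forall_map_eq_iff {e e' : SignedRetraction n}
    (h : ∀ x y, e x = e y ↔ e' x = e' y) : e = e' := by
  refine DFunLike.ext _ _ fun x => ?_
  have map_e : e' (e x) = e' x := (h _ _).mp (e.map_map x)
  have map_e' : e (e' x) = e x := (h _ _).mpr (e'.map_map x)
  have abs_eq : |e x| = |e' x| :=
    le_antisymm (map_e' ▸ e.abs_map_le (e' x)) (map_e ▸ e'.abs_map_le (e x))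
  rcases abs_eq_abs.mp abs_eq with h | h
  · exact h
  · rw [h, e'.map_neg, e'.map_map] at map_e
    omega

/-- Extension of `e` to `±(n + 1)`, with `n + 1 ↦ v`. -/
def extend (v : ℤ) (hv : v ∈ insert (n + 1 : ℤ) e.fixedPoints) : SignedRetraction (n + 1) where
  toFun x := if x = n + 1 then v else if x = -(n + 1) then -v else e x
  map_neg' x := by
    have := e.map_neg x
    split_ifs <;> omega
  map_map' x := by
    rw [mem_insert, mem_fixedPoints] at hv
    have := e.map_neg v
    have := e.map_map x
    have := abs_le.mp (e.abs_map_le_natCast x)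
    have := abs_le.mp (e.abs_map_le_natCast v)
    split_ifs <;> omega
  abs_map_le' x := by
    rw [mem_insert, mem_fixedPoints] at hv
    have := abs_le.mp (e.abs_map_le_natCast v)
    have := e.abs_map_le x
    grind
  map_of_lt' x hx := by
    have map_of_lt (h : n < |x|) : e x = 0 := e.map_of_lt h
    push_cast at hx
    grind

section Extend

variable {e} {v : ℤ} (hv : v ∈ insert (n + 1 : ℤ) e.fixedPoints)

lemma extend_apply (x : ℤ) :
    e.extend v hv x = if x = n + 1 then v else if x = -(n + 1) then -v else e x := rfl

lemma extend_apply_of_abs_le {x : ℤ} (hx : |x| ≤ n) : e.extend v hv x = e x := by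
  rw [abs_le] at hx
  rw [extend_apply, if_neg (by omega), if_neg (by omega)]

lemma extend_apply_succ : e.extend v hv (n + 1) = v := if_pos rfl

lemma rank_eq_card_add_ite (f : SignedRetraction (n + 1)) :
    f.rank = #{v ∈ Icc (1 : ℤ) n | f v = v} + if f (n + 1) = n + 1 then 1 else 0 := by
  have Icc_succ : Icc (1 : ℤ) (n + 1 : ℕ) = insert (n + 1 : ℤ) (Icc (1 : ℤ) n) := by
    ext x
    simp only [mem_insert, mem_Icc]
    omega
  rw [rank, Icc_succ, filter_insert]
  split_ifs
  · exact card_insert_of_notMem (by simp)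
  · rfl

lemma rank_extend : (e.extend v hv).rank = e.rank + if v = n + 1 then 1 else 0 := by
  rw [rank_eq_card_add_ite, extend_apply_succ, rank]
  congr 2
  refine filter_congr fun x hx => ?_
  rw [extend_apply_of_abs_le hv (by grind)]

end Extend

lemma extend_injective : Function.Injective
    fun x : Σ e : SignedRetraction n, {v // v ∈ insert (n + 1 : ℤ) e.fixedPoints} =>
      x.1.extend x.2 x.2.2 := by
  rintro ⟨e, v, hv⟩ ⟨e', v', hv'⟩ h
  replace h : e.extend v hv = e'.extend v' hv' := h
  obtain rfl : e = e' := DFunLike.ext _ _ fun x => by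
    rcases le_or_gt |x| n with hx | hx
    · rw [← extend_apply_of_abs_le hv hx, h, extend_apply_of_abs_le hv' hx]
    · rw [e.map_of_lt hx, e'.map_of_lt hx]
  obtain rfl : v = v' := by rw [← extend_apply_succ hv, h, extend_apply_succ hv']
  rfl

/-- The restriction of `e` to `{-n, …, n}`, extended by zero. -/
def restrict (e : SignedRetraction (n + 1)) : SignedRetraction n where
  toFun x := if |x| ≤ n then e x else 0
  map_neg' x := by simp only [abs_neg, e.map_neg, neg_ite, neg_zero]
  map_map' x := by
    have := e.abs_map_le x
    have := e.map_map x
    grind [e.map_zero]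
  abs_map_le' x := by
    have := e.abs_map_le x
    grind
  map_of_lt' x hx := if_neg hx.not_ge

lemma restrict_apply (e : SignedRetraction (n + 1)) (x : ℤ) :
    e.restrict x = if |x| ≤ n then e x else 0 := rfl

lemma map_succ_mem_insert_fixedPoints_restrict (e : SignedRetraction (n + 1)) :
    e (n + 1) ∈ insert (n + 1 : ℤ) e.restrict.fixedPoints := by
  rw [mem_insert, mem_fixedPoints, restrict_apply]
  have map_map := e.map_map (n + 1)
  have map_neg := e.map_neg (n + 1)
  have abs_le := e.abs_map_le_natCast (n + 1)
  grind

lemma extend_surjective : Function.Surjective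
    fun x : Σ e : SignedRetraction n, {v // v ∈ insert (n + 1 : ℤ) e.fixedPoints} =>
      x.1.extend x.2 x.2.2 := by
  refine fun e => ⟨⟨e.restrict, e (n + 1), e.map_succ_mem_insert_fixedPoints_restrict⟩,
    DFunLike.ext _ _ fun x => ?_⟩
  have map_neg := e.map_neg (n + 1)
  have map_of_lt (h : (n + 1 : ℕ) < |x|) : e x = 0 := e.map_of_lt h
  simp only [extend_apply, restrict_apply]
  grind

instance : Unique (SignedRetraction 0) where
  default := ⟨0, by simp, by simp, by simp, by simp⟩
  uniq e := DFunLike.ext _ _ fun x => abs_nonpos_iff.mp (e.abs_map_le_natCast x)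

instance instFinite : (n : ℕ) → Finite (SignedRetraction n)
  | 0 => inferInstance
  | n + 1 => have := instFinite n; Finite.of_surjective _ extend_surjective

noncomputable instance : Fintype (SignedRetraction n) := Fintype.ofFinite _

lemma sum_rank_succ {M : Type*} [AddCommMonoid M] (F : ℕ → M) :
    ∑ e : SignedRetraction (n + 1), F e.rank =
      ∑ e : SignedRetraction n, ((2 * e.rank + 1) • F e.rank + F (e.rank + 1)) := by
  rw [← Function.Bijective.sum_comp ⟨extend_injective, extend_surjective⟩ _, Fintype.sum_sigma]
  refine sum_congr rfl fun e _ => ?_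
  have succ_notMem : (n + 1 : ℤ) ∉ e.fixedPoints := by simp [fixedPoints]
  have rank_old : ∀ v ∈ e.fixedPoints, F (e.rank + if v = n + 1 then 1 else 0) = F e.rank :=
    fun v hv => by rw [if_neg (ne_of_mem_of_not_mem hv succ_notMem), add_zero]
  simp only [rank_extend]
  rw [sum_coe_sort _ fun v : ℤ => F (e.rank + if v = n + 1 then 1 else 0), sum_insert succ_notMem,
    sum_congr rfl rank_old, sum_const, card_fixedPoints, if_pos rfl, add_comm]

end SignedRetraction

lemma mem_negSet {C : Finset ℤ} {x : ℤ} : x ∈ negSet C ↔ -x ∈ C := by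
  simp only [negSet, mem_image, neg_eq_iff_eq_neg, exists_eq_right]

lemma negSet_negSet (C : Finset ℤ) : negSet (negSet C) = C := by
  ext x
  rw [mem_negSet, mem_negSet, neg_neg]

/-- The set `{-n, …, -1, 1, …, n}` underlying a `B_n`-partition. -/
noncomputable def signedRange (n : ℕ) : Finset ℤ := (Icc (-(n : ℤ)) n).erase 0

lemma mem_signedRange {n : ℕ} {x : ℤ} : x ∈ signedRange n ↔ x ≠ 0 ∧ |x| ≤ n := by
  rw [signedRange, mem_erase, mem_Icc, abs_le]

lemma neg_mem_signedRange {n : ℕ} {x : ℤ} : -x ∈ signedRange n ↔ x ∈ signedRange n := by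
  rw [mem_signedRange, mem_signedRange, neg_ne_zero, abs_neg]

namespace BPartition

variable {n : ℕ}

lemma ext_blocks {P Q : BPartition n} (h : P.blocks = Q.blocks) : P = Q := by
  cases P
  cases Q
  congr

variable (P : BPartition n)

lemma mem_signedRange_iff {x : ℤ} : x ∈ signedRange n ↔ ∃ C ∈ P.blocks, x ∈ C :=
  mem_signedRange.trans (P.cover x)

lemma eq_of_mem {C D : Finset ℤ} {x : ℤ} (hC : C ∈ P.blocks) (hD : D ∈ P.blocks) (hxC : x ∈ C)
    (hxD : x ∈ D) : C = D :=
  not_imp_comm.mp (P.disj C hC D hD) (not_disjoint_iff.mpr ⟨x, hxC, hxD⟩)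

/-- The equivalence relation on `ℤ` whose classes are the nonzero blocks of `P` and the complement
of their union. -/
def setoid : Setoid ℤ where
  r x y := ∀ C ∈ P.blocks, negSet C ≠ C → (x ∈ C ↔ y ∈ C)
  iseqv :=
    ⟨fun _ _ _ _ => Iff.rfl, fun h C hC hne => (h C hC hne).symm,
      fun h h' C hC hne => (h C hC hne).trans (h' C hC hne)⟩

lemma setoid_iff {x y : ℤ} :
    P.setoid x y ↔ ∀ C ∈ P.blocks, negSet C ≠ C → (x ∈ C ↔ y ∈ C) := Iff.rfl

lemma setoid_neg {x y : ℤ} (h : P.setoid x y) : P.setoid (-x) (-y) := by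
  intro C hC hne
  rw [← mem_negSet, ← mem_negSet]
  exact h _ (P.closed C hC) (by rwa [negSet_negSet, ne_comm])

lemma setoid_zero_iff {x : ℤ} :
    P.setoid x 0 ↔ ∀ C ∈ P.blocks, negSet C ≠ C → x ∉ C := by
  have zero_notMem (C) (hC : C ∈ P.blocks) : (0 : ℤ) ∉ C := fun h =>
    (mem_signedRange.mp (P.mem_signedRange_iff.mpr ⟨C, hC, h⟩)).1 rfl
  exact forall₃_congr fun C hC _ => by rw [iff_false_right (zero_notMem C hC)]

lemma setoid_zero_of_setoid_neg {x : ℤ} (h : P.setoid x (-x)) : P.setoid x 0 := by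
  rw [setoid_zero_iff]
  intro C hC hne hx
  exact hne (P.eq_of_mem (P.closed C hC) hC (mem_negSet.mpr ((h C hC hne).mp hx)) hx)

lemma setoid_zero_of_lt {x : ℤ} (h : n < |x|) : P.setoid x 0 := by
  rw [setoid_zero_iff]
  intro C hC _ hx
  exact h.not_ge ((P.cover x).mpr ⟨C, hC, hx⟩).2

lemma eq_filter_setoid {C : Finset ℤ} {x : ℤ} (hC : C ∈ P.blocks) (hx : x ∈ C) :
    C = {y ∈ signedRange n | P.setoid x y} := by
  ext y
  rw [mem_filter, P.mem_signedRange_iff]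
  constructor
  · intro hy
    refine ⟨⟨C, hC, hy⟩, fun D hD _ => ⟨fun hxD => ?_, fun hyD => ?_⟩⟩
    · rwa [P.eq_of_mem hD hC hxD hx]
    · rwa [P.eq_of_mem hD hC hyD hy]
  · rintro ⟨⟨D, hD, hyD⟩, hxy⟩
    by_cases hCz : negSet C = C
    · by_cases hDz : negSet D = D
      · rwa [P.zeroUnique C hC D hD hCz hDz]
      · rwa [P.eq_of_mem hC hD hx ((hxy D hD hDz).mpr hyD)]
    · exact (hxy C hC hCz).mp hx

lemma blocks_eq_image_setoid :
    P.blocks = (signedRange n).image fun x => {y ∈ signedRange n | P.setoid x y} := by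
  ext C
  rw [mem_image]
  constructor
  · intro hC
    obtain ⟨x, hx⟩ := P.nonempty C hC
    exact ⟨x, P.mem_signedRange_iff.mpr ⟨C, hC, hx⟩, (P.eq_filter_setoid hC hx).symm⟩
  · rintro ⟨x, hx, rfl⟩
    obtain ⟨C, hC, hxC⟩ := P.mem_signedRange_iff.mp hx
    rwa [← P.eq_filter_setoid hC hxC]

lemma setoid_injective : Function.Injective (setoid (n := n)) := fun P Q h =>
  ext_blocks (by rw [blocks_eq_image_setoid, blocks_eq_image_setoid, h])

end BPartition

namespace SignedRetraction

variable {n : ℕ}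

lemma exists_map_eq_iff (s : Setoid ℤ) (neg : ∀ {x y}, s x y → s (-x) (-y))
    (zero_of_neg : ∀ {x}, s x (-x) → s x 0) (zero_of_lt : ∀ {x : ℤ}, n < |x| → s x 0) :
    ∃ e : SignedRetraction n, ∀ x y, e x = e y ↔ s x y := by
  have exists_least (x : ℤ) : ∃ a, s x a ∧ ∀ b, s x b → |a| ≤ |b| := by
    obtain ⟨a, ha, hmin⟩ := (measure Int.natAbs).wf.has_min {a | s x a} ⟨x, s.refl x⟩
    refine ⟨a, ha, fun b hb => ?_⟩
    rw [Int.abs_eq_natAbs, Int.abs_eq_natAbs, Nat.cast_le]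
    exact not_lt.mp (hmin b hb)
  choose e rel_e abs_e_le using exists_least
  have e_eq {x a : ℤ} (ha : s x a) (hmin : ∀ b, s x b → |a| ≤ |b|) : e x = a := by
    have rel : s a (e x) := s.trans (s.symm ha) (rel_e x)
    rcases abs_eq_abs.mp (le_antisymm (abs_e_le x a ha) (hmin _ (rel_e x))) with h | h
    · exact h
    · -- A class containing both `a` and `-a` contains `0`, so its least element is `0`.
      have : |a| ≤ |0| := hmin 0 (s.trans ha (zero_of_neg (h ▸ rel)))
      simp_all
  refine ⟨⟨e, fun x => ?_, fun x => ?_, fun x => ?_, fun x hx => ?_⟩, fun x y => ⟨fun h => ?_, ?_⟩⟩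
  · refine e_eq (neg (rel_e x)) fun b hb => ?_
    rw [abs_neg, ← abs_neg b]
    exact abs_e_le x _ (by simpa using neg hb)
  · exact e_eq (s.refl _) fun b hb => abs_e_le x b (s.trans (rel_e x) hb)
  · exact abs_e_le x x (s.refl x)
  · exact abs_nonpos_iff.mp (abs_e_le x 0 (zero_of_lt hx))
  · change e x = e y at h
    exact s.trans (h ▸ rel_e x) (s.symm (rel_e y))
  · exact fun h => e_eq (s.trans h (rel_e y)) fun b hb => abs_e_le y b (s.trans (s.symm h) hb)

variable (e : SignedRetraction n)

lemma mem_signedRange_of_map_ne_zero {x : ℤ} (hx : e x ≠ 0) : x ∈ signedRange n :=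
  mem_signedRange.mpr ⟨fun h => hx (h ▸ e.map_zero), e.abs_le_of_map_ne_zero hx⟩

/-- The block of `x` in the `B_n`-partition encoded by `e`. -/
noncomputable def fiber (x : ℤ) : Finset ℤ := {y ∈ signedRange n | e y = e x}

lemma mem_fiber {x y : ℤ} : y ∈ e.fiber x ↔ y ∈ signedRange n ∧ e y = e x := mem_filter

lemma negSet_fiber (x : ℤ) : negSet (e.fiber x) = e.fiber (-x) := by
  ext y
  rw [mem_negSet, mem_fiber, mem_fiber, neg_mem_signedRange, map_neg, map_neg, neg_eq_iff_eq_neg]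

variable {e}

lemma fiber_eq_fiber_iff {x y : ℤ} (hx : x ∈ signedRange n) :
    e.fiber x = e.fiber y ↔ e x = e y :=
  ⟨fun h => (e.mem_fiber.mp (h ▸ e.mem_fiber.mpr ⟨hx, rfl⟩)).2, fun h => by rw [fiber, fiber, h]⟩

lemma negSet_fiber_eq_self_iff {x : ℤ} (hx : x ∈ signedRange n) :
    negSet (e.fiber x) = e.fiber x ↔ e x = 0 := by
  rw [negSet_fiber, eq_comm, fiber_eq_fiber_iff hx, map_neg, self_eq_neg]

variable (e)

/-- The `B_n`-partition encoded by `e`: its blocks are the fibers of `e`. -/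
noncomputable def toBPartition : BPartition n where
  blocks := (signedRange n).image e.fiber
  cover x := by
    rw [← mem_signedRange, exists_mem_image]
    exact ⟨fun hx => ⟨x, hx, e.mem_fiber.mpr ⟨hx, rfl⟩⟩, fun ⟨_, _, hx⟩ => (e.mem_fiber.mp hx).1⟩
  nonempty := forall_mem_image.mpr fun x hx => ⟨x, e.mem_fiber.mpr ⟨hx, rfl⟩⟩
  disj := by
    refine forall_mem_image.mpr fun x hx => forall_mem_image.mpr fun y _ hne => ?_
    rw [disjoint_left]
    intro z hzx hzy
    exact hne ((fiber_eq_fiber_iff hx).mpr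
      ((e.mem_fiber.mp hzx).2.symm.trans (e.mem_fiber.mp hzy).2))
  closed := forall_mem_image.mpr fun x hx =>
    e.negSet_fiber x ▸ mem_image_of_mem _ (neg_mem_signedRange.mpr hx)
  zeroUnique := by
    refine forall_mem_image.mpr fun x hx => forall_mem_image.mpr fun y hy hxz hyz => ?_
    rw [negSet_fiber_eq_self_iff hx] at hxz
    rw [negSet_fiber_eq_self_iff hy] at hyz
    rw [fiber_eq_fiber_iff hx, hxz, hyz]

lemma setoid_toBPartition {x y : ℤ} : e.toBPartition.setoid x y ↔ e x = e y := by
  have setoid_iff : e.toBPartition.setoid x y ↔ ∀ z, e z ≠ 0 → (e x = e z ↔ e y = e z) := by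
    rw [BPartition.setoid_iff, toBPartition, forall_mem_image]
    have mem_fiber_iff {z : ℤ} (hz : e z ≠ 0) (u : ℤ) : u ∈ e.fiber z ↔ e u = e z := by
      rw [mem_fiber, and_iff_right_iff_imp]
      exact fun h => e.mem_signedRange_of_map_ne_zero (h ▸ hz)
    constructor
    · intro h z hz
      have hzn := e.mem_signedRange_of_map_ne_zero hz
      rw [← mem_fiber_iff hz, ← mem_fiber_iff hz]
      exact h hzn (mt (negSet_fiber_eq_self_iff hzn).mp hz)
    · intro h z hzn hne
      have hz : e z ≠ 0 := mt (negSet_fiber_eq_self_iff hzn).mpr hne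
      rw [mem_fiber_iff hz, mem_fiber_iff hz]
      exact h z hz
  grind

lemma toBPartition_bijective : Function.Bijective (toBPartition (n := n)) := by
  refine ⟨fun e e' h => ?_, fun P => ?_⟩
  · exact eq_of_forall_map_eq_iff fun x y => by
      rw [← setoid_toBPartition, h, setoid_toBPartition]
  · obtain ⟨e, he⟩ := exists_map_eq_iff P.setoid P.setoid_neg P.setoid_zero_of_setoid_neg
      P.setoid_zero_of_lt
    exact ⟨e, BPartition.setoid_injective (Setoid.ext fun x y => by
      rw [setoid_toBPartition, he])⟩

lemma nonzero_blocks_toBPartition :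
    {C ∈ e.toBPartition.blocks | negSet C ≠ C} = (e.fixedPoints.erase 0).image e.fiber := by
  ext C
  simp only [toBPartition, mem_filter, mem_image, mem_erase, mem_fixedPoints]
  constructor
  · rintro ⟨⟨x, hx, rfl⟩, hne⟩
    rw [ne_eq, negSet_fiber_eq_self_iff hx] at hne
    refine ⟨e x, ⟨hne, e.map_map x⟩, ?_⟩
    rw [eq_comm, fiber_eq_fiber_iff hx, map_map]
  · rintro ⟨v, ⟨hv, hev⟩, rfl⟩
    have hvn := e.mem_signedRange_of_map_ne_zero (hev.symm ▸ hv)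
    refine ⟨⟨v, hvn, rfl⟩, ?_⟩
    rwa [ne_eq, negSet_fiber_eq_self_iff hvn, hev]

lemma hasPairs_toBPartition_iff {r : ℕ} : hasPairs e.toBPartition r ↔ e.rank = r := by
  have fiber_injOn : Set.InjOn e.fiber (e.fixedPoints.erase 0) := by
    intro v hv u hu h
    obtain ⟨⟨hv, hev⟩, ⟨hu, heu⟩⟩ : (v ≠ 0 ∧ e v = v) ∧ (u ≠ 0 ∧ e u = u) := by
      simpa only [coe_erase, Set.mem_sdiff, mem_coe, mem_fixedPoints, Set.mem_singleton_iff,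
        and_comm] using And.intro hv hu
    rwa [fiber_eq_fiber_iff (e.mem_signedRange_of_map_ne_zero (hev.symm ▸ hv)), hev, heu] at h
  rw [hasPairs, nonzero_blocks_toBPartition, card_image_of_injOn fiber_injOn,
    card_fixedPoints_erase_zero]
  omega

lemma card_rank_eq (n r : ℕ) : #{e : SignedRetraction n | e.rank = r} = SB n r := by
  rw [SB, ← Fintype.card_subtype, ← Nat.card_eq_fintype_card]
  exact Nat.card_congr ((Equiv.ofBijective _ toBPartition_bijective).subtypeEquiv fun e =>
    e.hasPairs_toBPartition_iff.symm)

end SignedRetraction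

section Frobenius

open Polynomial (X)
open scoped Polynomial

lemma eulerianPolynomialB_eq_sum_signedRetraction (n : ℕ) :
    eulerianPolynomialB n = ∑ e : SignedRetraction n,
      (2 ^ e.rank * e.rank.factorial) • (X ^ e.rank * (1 - X) ^ (n - e.rank)) := by
  induction n with
  | zero => simp [eulerianPolynomialB_zero, SignedRetraction.rank]
  | succ n ih =>
    rw [eulerianPolynomialB_succ, ih, map_sum, SignedRetraction.sum_rank_succ fun r =>
      (2 ^ r * r.factorial) • (X ^ r * (1 - X) ^ (n + 1 - r) : ℤ[X])]
    refine sum_congr rfl fun e _ => ?_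
    rw [map_nsmul, eulerOperatorB_X_pow_mul_one_sub_X_pow e.rank_le, smul_add, smul_smul, smul_smul,
      smul_smul, Nat.add_sub_add_right, Nat.factorial_succ]
    congr 2 <;> ring

/-- The type `B` analogue of Frobenius' formula for the Eulerian polynomials. -/
theorem eulerianPolynomialB_eq_sum_SB (n : ℕ) :
    eulerianPolynomialB n = ∑ r ∈ range (n + 1),
      (2 ^ r * r.factorial * SB n r) • (X ^ r * (1 - X) ^ (n - r)) := by
  rw [eulerianPolynomialB_eq_sum_signedRetraction, ← sum_fiberwise_of_maps_to'
    (fun e _ => mem_range_succ_iff.mpr e.rank_le) fun r =>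
      (2 ^ r * r.factorial) • (X ^ r * (1 - X) ^ (n - r) : ℤ[X])]
  refine sum_congr rfl fun r _ => ?_
  rw [sum_const, SignedRetraction.card_rank_eq, smul_smul, mul_comm (SB n r)]

end Frobenius

/-- `A_B(n,k) = Σ_{r=0}^{k} (−1)^{k−r} · 2^r · r! · S_B(n,r) · C(n−r, k−r)`. -/
theorem eulerian_stirling_typeB (n k : ℕ) (h : k ≤ n) :
    (EulB n k : ℤ) =
      ∑ r ∈ Finset.range (k + 1),
        (-1 : ℤ) ^ (k - r) * 2 ^ r * Nat.factorial r * SB n r * Nat.choose (n - r) (k - r) := by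
  have coeff_term (r : ℕ) : ((2 ^ r * r.factorial * SB n r) •
      (Polynomial.X ^ r * (1 - Polynomial.X) ^ (n - r) : Polynomial ℤ)).coeff k =
      if r ≤ k then (-1 : ℤ) ^ (k - r) * 2 ^ r * r.factorial * SB n r * (n - r).choose (k - r)
      else 0 := by
    rw [Polynomial.coeff_smul, coeff_X_pow_mul_one_sub_X_pow, smul_ite, smul_zero, nsmul_eq_mul]
    push_cast
    congr! 1
    ring
  rw [← coeff_eulerianPolynomialB, eulerianPolynomialB_eq_sum_SB, Polynomial.finsetSum_coeff,
    sum_congr rfl fun r _ => coeff_term r, ← sum_filter]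
  refine sum_congr (Finset.ext fun r => ?_) fun _ _ => rfl
  simp only [mem_filter, mem_range]
  omega
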